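/- Fix integers $k,m\ge 1$, disjoint alphabets $\mathcal T=\{t_1,\dots,t_k\}$ and $\mathcal A=\{a_1,\dots,a_m\}$, and for all $1\le i<j\le k$ an element $a_{ij}\in\mathcal A$. Let $F$ be the free group on $\mathcal T$, let $|u|$ denote the length of the reduced word of $u\in F$, and let $\theta:F\to\mathbb R^k$ be the homomorphism sending $t_i$ to the $i$-th standard basis vector; $\|\cdot\|$ is the Euclidean norm. For $v\in\mathbb Z^k$ put $u_v=t_1^{v_1}\cdots t_k^{v_k}$ (the ordered words), and for $u\in F$ put $\bar u=u_{\theta(u)}$. Write $[x,y]=x^{-1}y^{-1}xy$. Let $T=\mathbb Z^k$, regard elements of $\mathbb ZT$ as finitely supported functions $\mathbb Z^k\to\mathbb Z$, and let $\Lambda^+,\Lambda^-\subset\mathbb ZT$ be finite sets such that for every nonzero $x\in\mathbb R^k$ there is $\lambda\in\Lambda^+\cup\Lambda^-$ with $\langle x,v\rangle>0$ for all $v\in\operatorname{supp}\lambda$. For $\rho>0$ and a finite set $\mathcal R$ of words in $(\mathcal A\cup\mathcal T)^{\pm1}$, let $H(\rho,\mathcal R)$ be the group with generators $\mathcal A\cup\mathcal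 T$ and relators (i) $[t_i,t_j]\,a_{ij}^{-1}$ for $1\le i<j\le k$; (ii) $[a,u_v^{-1}bu_v]$ for $a,b\in\mathcal A$ and $v\in\mathbb Z^k$ with $\|v\|<\rho$; (iii) $\bigl(\prod_{v\in\operatorname{supp}\lambda}u_v^{-1}a^{\lambda(v)}u_v\bigr)a^{-1}$ for $a\in\mathcal A$, $\lambda\in\Lambda^+$, and $\bigl(\prod_{v\in\operatorname{supp}\lambda}u_v a^{\lambda(v)}u_v^{-1}\bigr)a^{-1}$ for $a\in\mathcal A$, $\lambda\in\Lambda^-$, each product being taken in an arbitrary fixed order on $\operatorname{supp}\lambda$; (iv) the elements of $\mathcal R$. The area of a word $w$ representing $1$ in $H(\rho,\mathcal R)$ is the least $N$ such that $w$ equals, in the free group on $\mathcal A\cup\mathcal T$, a product of $N$ conjugates of these relators and their inverses. Then there exists $\rho_0>0$, depending only on $k$ and $\Lambda^+\cup\Lambda^-$, such that for every $\rho\ge\rho_0$ there is a constant $K>1$, depending only on $k$, $m$, $\rho$ and $\Lambda^+\cup\Lambda^-$ (and not on $\mathcal R$), with the following property. In every group $H(\rho,\mathcal R)$, for every $a\in\mathcal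 A$ and every $u\in F$, the word $w=(u^{-1}au)(\bar u^{-1}a^{-1}\bar u)$ represents $1$, and for every $n\in\mathbb N$: (1) if every prefix $p$ of the reduced word of $u$ satisfies $\|\theta(p)\|<n$, then the area of $w$ is at most $|u|\,K^n$; (2) if $|u|\le n$, then the area of $w$ is at most $K^n$. -/

import Mathlib

/-- `w` equals a product of exactly `N` conjugates of elements of `R` and their inverses. -/
def IsProdConj {G : Type*} [Group G] (R : Set G) (w : G) (N : ℕ) : Prop :=
  ∃ r f : Fin N → G, (∀ i, r i ∈ R ∨ (r i)⁻¹ ∈ R) ∧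
    w = (List.ofFn fun i => (f i)⁻¹ * r i * f i).prod

/-- The area of `w` with respect to the relators `R`: the least `N` such that `w` is a product of
`N` conjugates of elements of `R` and their inverses. (It is meaningful for `w` in the normal
closure of `R`; elsewhere the set is empty and the value is the default `0`.) -/
noncomputable def area {G : Type*} [Group G] (R : Set G) (w : G) : ℕ :=
  sInf {N | IsProdConj R w N}

/-- The commutator `[x, y] = x⁻¹ * y⁻¹ * x * y`. -/
def pcomm {G : Type*} [Group G] (x y : G) : G := x⁻¹ * y⁻¹ * x * y

/-- The conjugate `x ^ y = y⁻¹ * x * y`. -/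
def pconj {G : Type*} [Group G] (x y : G) : G := y⁻¹ * x * y

/-- The Euclidean norm of an integer vector. -/
noncomputable def normV {k : ℕ} (v : Fin k → ℤ) : ℝ :=
  Real.sqrt (∑ i, (v i : ℝ) ^ 2)

/-- The homomorphism `θ` from the free group on `t₁, …, t_k` with `θ(tᵢ) = eᵢ`; its values have
integer coordinates. -/
def theta {k : ℕ} : FreeGroup (Fin k) →* Multiplicative (Fin k → ℤ) :=
  FreeGroup.lift fun i => Multiplicative.ofAdd (Pi.single i 1)

/-- The exponent-sum vector `θ(u)`. -/
def expVec {k : ℕ} (u : FreeGroup (Fin k)) : Fin k → ℤ := Multiplicative.toAdd (theta u)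

/-- The ordered word `u_v = t₁^{v₁} ⋯ t_k^{v_k}`. -/
def ordWord {k : ℕ} (v : Fin k → ℤ) : FreeGroup (Fin k) :=
  (List.ofFn fun i : Fin k => FreeGroup.of i ^ v i).prod

/-- The ordered word with the same exponent sums as `u`. -/
def ordered {k : ℕ} (u : FreeGroup (Fin k)) : FreeGroup (Fin k) := ordWord (expVec u)

/-- The trace of `u` lies in the open ball of radius `n`: `‖θ(p)‖ < n` for every prefix `p` of the
reduced word of `u`. -/
def TraceInBall {k : ℕ} (u : FreeGroup (Fin k)) (n : ℕ) : Prop :=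
  ∀ p : List (Fin k × Bool), p <+: u.toWord → normV (expVec (FreeGroup.mk p)) < n

/-- The generator `aᵢ ∈ 𝒜`. -/
def agen {m k : ℕ} (i : Fin m) : FreeGroup (Fin m ⊕ Fin k) := FreeGroup.of (Sum.inl i)

/-- The generator `tᵢ ∈ 𝒯`. -/
def tgen {m k : ℕ} (i : Fin k) : FreeGroup (Fin m ⊕ Fin k) := FreeGroup.of (Sum.inr i)

/-- A word in the letters `𝒯`, viewed as a word in the letters `𝒜 ∪ 𝒯`. -/
def tword {m k : ℕ} (u : FreeGroup (Fin k)) : FreeGroup (Fin m ⊕ Fin k) :=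
  FreeGroup.map Sum.inr u

/-- `ord` lists the support of each `λ ∈ ℤT` without repetition. -/
def IsSupportOrder {k : ℕ} (ord : ((Fin k → ℤ) →₀ ℤ) → List (Fin k → ℤ)) : Prop :=
  ∀ lam, (ord lam).Nodup ∧ ∀ v, v ∈ ord lam ↔ v ∈ lam.support

/-- The relator `(∏_{v ∈ supp λ} u_v⁻¹ a^{λ(v)} u_v) a⁻¹`, with `l` listing `supp λ`. -/
def lamRelP {m k : ℕ} (l : List (Fin k → ℤ)) (a : Fin m) (lam : (Fin k → ℤ) →₀ ℤ) :
    FreeGroup (Fin m ⊕ Fin k) :=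
  (l.map fun v => pconj (agen a ^ lam v) (tword (ordWord v))).prod * (agen a)⁻¹

/-- The relator `(∏_{v ∈ supp λ} u_v a^{λ(v)} u_v⁻¹) a⁻¹`, with `l` listing `supp λ`. -/
def lamRelM {m k : ℕ} (l : List (Fin k → ℤ)) (a : Fin m) (lam : (Fin k → ℤ) →₀ ℤ) :
    FreeGroup (Fin m ⊕ Fin k) :=
  (l.map fun v => pconj (agen a ^ lam v) (tword (ordWord v))⁻¹).prod * (agen a)⁻¹

/-- The relators of `H(ρ, ℛ)`. Only the values `aij i j` with `i < j` matter. -/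
def HRel {m k : ℕ} (aij : Fin k → Fin k → Fin m) (Lp Lm : Finset ((Fin k → ℤ) →₀ ℤ))
    (ord : ((Fin k → ℤ) →₀ ℤ) → List (Fin k → ℤ)) (ρ : ℝ)
    (Rx : Set (FreeGroup (Fin m ⊕ Fin k))) : Set (FreeGroup (Fin m ⊕ Fin k)) :=
  {w | (∃ i j : Fin k, i < j ∧ w = pcomm (tgen i) (tgen j) * (agen (aij i j))⁻¹) ∨
       (∃ (a b : Fin m) (v : Fin k → ℤ), normV v < ρ ∧
         w = pcomm (agen a) (pconj (agen b) (tword (ordWord v)))) ∨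
       (∃ a : Fin m, ∃ lam ∈ Lp, w = lamRelP (ord lam) a lam) ∨
       (∃ a : Fin m, ∃ lam ∈ Lm, w = lamRelM (ord lam) a lam) ∨
       w ∈ Rx}

/-- Every nonzero `x ∈ ℝ^k` pairs positively with the whole support of some `λ ∈ L`. -/
def TameCond {k : ℕ} (L : Finset ((Fin k → ℤ) →₀ ℤ)) : Prop :=
  ∀ x : Fin k → ℝ, x ≠ 0 → ∃ lam ∈ L, ∀ v ∈ lam.support, 0 < ∑ i, x i * (v i : ℝ)

/-- The word `(u⁻¹ a u)(ū⁻¹ a⁻¹ ū)`. -/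
def orderingWord {m k : ℕ} (a : Fin m) (u : FreeGroup (Fin k)) : FreeGroup (Fin m ⊕ Fin k) :=
  pconj (agen a) (tword u) * pconj (agen a)⁻¹ (tword (ordered u))

/-!
Area is a bi-invariant metric, so it suffices to show that every `a` commutes with every conjugate
`b ^ u_v` up to an area exponential in `‖v‖`. Granting this, a word is ordered letter by letter:
moving a letter past another creates a commutator `[t_i, t_j]`, that is a generator `a_{ij}`, and
`u⁻¹ a u` is not affected by conjugation by elements that nearly commute with it.

The commutation bound is proved by induction on balls. If `‖v‖` is large, tameness, made uniform by
compactness of the sphere, provides `λ` such that `w + v` is shorter than `v` by a definite amount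
for all `w ∈ supp λ`. The relator of `λ` replaces `b ^ u_v` by a product of powers of the
`b ^ (u_w u_v)`, and merging `u_w u_v` into `u_{w+v}` only involves commutators already controlled.
If the relator belongs to `Λ⁻`, one expands `a` instead, which is the same situation for the
reversed alphabet. Each step multiplies the bound by a constant.
-/

/-! ### Area as a bi-invariant metric -/

section AreaLe

open scoped Pointwise

variable {G : Type*} [Group G] {R : Set G} {A B : ℝ} {M N : ℕ} {v w : G}

theorem isProdConj_iff_mem_pow :
    IsProdConj R w N ↔ w ∈ Group.conjugatesOfSet (R ∪ R⁻¹) ^ N := by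
  simp only [IsProdConj, Set.mem_pow]
  constructor
  · rintro ⟨r, f, hr, rfl⟩
    refine ⟨fun i => ⟨(f i)⁻¹ * r i * f i, Group.mem_conjugatesOfSet_iff.2
      ⟨r i, hr i, isConj_iff.2 ⟨(f i)⁻¹, by rw [inv_inv]⟩⟩⟩, rfl⟩
  · rintro ⟨g, rfl⟩
    have hg (i : Fin N) : ∃ r, (r ∈ R ∨ r⁻¹ ∈ R) ∧ ∃ f, f * r * f⁻¹ = g i := by
      simpa only [isConj_iff, Set.mem_union, Set.mem_inv] using
        Group.mem_conjugatesOfSet_iff.1 (g i).2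
    choose r hr f hf using hg
    exact ⟨r, fun i => (f i)⁻¹, hr, by simp only [inv_inv, hf]⟩

theorem IsProdConj.mul (hv : IsProdConj R v M) (hw : IsProdConj R w N) :
    IsProdConj R (v * w) (M + N) := by
  rw [isProdConj_iff_mem_pow] at *
  rw [pow_add]
  exact Set.mul_mem_mul hv hw

theorem IsProdConj.conj (hw : IsProdConj R w N) (g : G) : IsProdConj R (g * w * g⁻¹) N := by
  obtain ⟨r, f, hr, rfl⟩ := hw
  refine ⟨r, fun i => f i * g⁻¹, hr, ?_⟩
  rw [← MulAut.conj_apply, map_list_prod, List.map_ofFn]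
  simp only [Function.comp_def, MulAut.conj_apply, mul_inv_rev, inv_inv, mul_assoc]

theorem inv_conjugatesOfSet (S : Set G) :
    (Group.conjugatesOfSet S)⁻¹ = Group.conjugatesOfSet S⁻¹ := by
  ext x
  simp only [Set.mem_inv, Group.mem_conjugatesOfSet_iff]
  refine (Equiv.inv G).exists_congr fun a => ?_
  have hconj : IsConj a x⁻¹ ↔ IsConj a⁻¹ x := by
    simp only [isConj_iff, eq_inv_iff_mul_eq_one, ← inv_eq_iff_mul_eq_one, conj_inv]
  simp only [hconj, Equiv.inv_apply, inv_inv]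

theorem IsProdConj.inv (hw : IsProdConj R w N) : IsProdConj R w⁻¹ N := by
  rw [isProdConj_iff_mem_pow] at *
  have hR : Group.conjugatesOfSet (R ∪ R⁻¹) = (Group.conjugatesOfSet (R ∪ R⁻¹))⁻¹ := by
    rw [inv_conjugatesOfSet, Set.union_inv, inv_inv, Set.union_comm]
  rwa [hR, inv_pow, Set.inv_mem_inv]

theorem IsProdConj.mem_normalClosure (hw : IsProdConj R w N) : w ∈ Subgroup.normalClosure R := by
  have hR : R ∪ R⁻¹ ⊆ Subgroup.normalClosure R :=
    Set.union_subset Subgroup.subset_normalClosure fun _ hx =>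
      inv_mem_iff.1 (Subgroup.subset_normalClosure hx)
  exact Subgroup.pow_subset (Group.conjugatesOfSet_subset hR) (isProdConj_iff_mem_pow.1 hw)

/-- `w` is a product of at most `A` conjugates of elements of `R` and their inverses; unlike
`area R w ≤ A`, this entails that `w` lies in the normal closure of `R`. -/
def AreaLe (R : Set G) (A : ℝ) (w : G) : Prop :=
  ∃ N : ℕ, IsProdConj R w N ∧ (N : ℝ) ≤ A

theorem AreaLe.mono (h : AreaLe R A w) (hAB : A ≤ B) : AreaLe R B w :=
  let ⟨N, hN, hA⟩ := h
  ⟨N, hN, hA.trans hAB⟩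

theorem AreaLe.area_le (h : AreaLe R A w) : area R w ≤ A :=
  let ⟨_, hN, hA⟩ := h
  (Nat.cast_le.2 (Nat.sInf_le hN)).trans hA

theorem AreaLe.mem_normalClosure (h : AreaLe R A w) : w ∈ Subgroup.normalClosure R :=
  let ⟨_, hN, _⟩ := h
  hN.mem_normalClosure

theorem areaLe_one (hA : 0 ≤ A) : AreaLe R A (1 : G) :=
  ⟨0, isProdConj_iff_mem_pow.2 (by simp), by simpa using hA⟩

theorem areaLe_of_mem (hw : w ∈ R) : AreaLe R 1 w := by
  refine ⟨1, isProdConj_iff_mem_pow.2 ?_, by simp⟩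
  rw [pow_one]
  exact Group.subset_conjugatesOfSet (Or.inl hw)

theorem AreaLe.mul (hv : AreaLe R A v) (hw : AreaLe R B w) : AreaLe R (A + B) (v * w) := by
  obtain ⟨M, hM, hA⟩ := hv
  obtain ⟨N, hN, hB⟩ := hw
  exact ⟨M + N, hM.mul hN, by push_cast; linarith⟩

theorem AreaLe.inv (hw : AreaLe R A w) : AreaLe R A w⁻¹ :=
  let ⟨N, hN, hA⟩ := hw
  ⟨N, hN.inv, hA⟩

theorem AreaLe.conj (hw : AreaLe R A w) (g : G) : AreaLe R A (g * w * g⁻¹) :=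
  let ⟨N, hN, hA⟩ := hw
  ⟨N, hN.conj g, hA⟩

end AreaLe

section Near

variable {G : Type*} [Group G] {R : Set G} {A B : ℝ} {x y z y' g h V W : G}

theorem pconj_one (x : G) : pconj x 1 = x := by
  simp [pconj]

theorem pconj_mul (x g h : G) : pconj x (g * h) = pconj (pconj x g) h := by
  simp [pconj, mul_assoc]

theorem mul_pconj (x y g : G) : pconj (x * y) g = pconj x g * pconj y g := by
  simp [pconj, mul_assoc]

theorem inv_pconj (x g : G) : pconj x⁻¹ g = (pconj x g)⁻¹ := by
  simp [pconj, mul_assoc]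

theorem pconj_eq_conj (x g : G) : pconj x g = MulAut.conj g⁻¹ x := by
  simp [pconj]

theorem zpow_pconj (x g : G) (n : ℤ) : pconj (x ^ n) g = pconj x g ^ n := by
  rw [pconj_eq_conj, map_zpow, pconj_eq_conj]

theorem list_prod_pconj (l : List G) (g : G) :
    pconj l.prod g = (l.map fun x => pconj x g).prod := by
  simp only [pconj_eq_conj, map_list_prod]

/-- `x` and `y` differ by a product of at most `A` conjugates of relators: the closed balls of the
bi-invariant metric given by area. -/
def Near (R : Set G) (A : ℝ) (x y : G) : Prop := AreaLe R A (x * y⁻¹)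

theorem Near.mono (h : Near R A x y) (hAB : A ≤ B) : Near R B x y := AreaLe.mono h hAB

theorem Near.refl (x : G) (hA : 0 ≤ A) : Near R A x x := by
  simpa [Near] using areaLe_one hA

theorem Near.symm (h : Near R A x y) : Near R A y x := by
  simpa [Near] using AreaLe.inv h

theorem Near.trans (h : Near R A x y) (h' : Near R B y z) : Near R (A + B) x z := by
  simpa [Near] using AreaLe.mul h h'

theorem Near.mul_right (h : Near R A x y) (g : G) : Near R A (x * g) (y * g) := by
  simpa [Near, mul_assoc] using h

theorem Near.mul_left (h : Near R A x y) (g : G) : Near R A (g * x) (g * y) := by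
  simpa [Near, mul_assoc] using AreaLe.conj h g

theorem Near.conj (h : Near R A x y) (g : G) : Near R A (pconj x g) (pconj y g) :=
  (h.mul_left g⁻¹).mul_right g

/-- `x` and `y` commute up to a product of at most `A` conjugates of relators. -/
def CommLe (R : Set G) (A : ℝ) (x y : G) : Prop := Near R A (x * y) (y * x)

theorem CommLe.mono (h : CommLe R A x y) (hAB : A ≤ B) : CommLe R B x y := Near.mono h hAB

theorem CommLe.symm (h : CommLe R A x y) : CommLe R A y x := Near.symm h

theorem commLe_iff_near_pconj : CommLe R A x y ↔ Near R A (pconj x y) x := by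
  constructor <;> intro h
  · simpa [pconj, mul_assoc] using Near.mul_left h y⁻¹
  · simpa [CommLe, pconj, mul_assoc] using Near.mul_left h y

theorem commLe_iff_areaLe_pcomm : CommLe R A x y ↔ AreaLe R A (pcomm x y) := by
  constructor <;> intro h
  · simpa [pcomm, mul_assoc] using AreaLe.conj h (y * x)⁻¹
  · simpa [CommLe, Near, pcomm, mul_assoc] using AreaLe.conj h (y * x)

theorem commLe_one_right (x : G) : CommLe R 0 x 1 := by
  simpa [CommLe] using Near.refl x le_rfl

theorem CommLe.inv_right (h : CommLe R A x y) : CommLe R A x y⁻¹ := by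
  simpa [CommLe, mul_assoc] using (Near.mul_left (Near.mul_right h y⁻¹) y⁻¹).symm

theorem CommLe.mul_right (h : CommLe R A x y) (h' : CommLe R B x z) :
    CommLe R (A + B) x (y * z) := by
  have hy : Near R A (x * (y * z)) (y * (x * z)) := by
    simpa only [mul_assoc] using Near.mul_right h z
  have hz : Near R B (y * (x * z)) (y * z * x) := by
    simpa only [mul_assoc] using Near.mul_left h' y
  exact hy.trans hz

theorem CommLe.pow_right (h : CommLe R A x y) (n : ℕ) : CommLe R (n * A) x (y ^ n) := by
  induction n with
  | zero => simpa using commLe_one_right x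
  | succ n ih =>
    rw [pow_succ]
    exact (ih.mul_right h).mono (by push_cast; linarith)

theorem CommLe.zpow_right (h : CommLe R A x y) (n : ℤ) :
    CommLe R (n.natAbs * A) x (y ^ n) := by
  obtain hn | hn := Int.natAbs_eq n
  · rw [hn, zpow_natCast, Int.natAbs_natCast]
    exact h.pow_right _
  · rw [hn, zpow_neg, zpow_natCast, Int.natAbs_neg, Int.natAbs_natCast]
    exact (h.pow_right _).inv_right

theorem CommLe.congr_right (h : CommLe R A x y) (h' : Near R B y' y) :
    CommLe R (A + 2 * B) x y' :=
  Near.mono (((h'.mul_left x).trans h).trans (h'.symm.mul_right x)) (by linarith)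

theorem CommLe.list_prod_zpow_right {κ : Type*} (l : List κ) (y : κ → G) (n : κ → ℤ)
    (h : ∀ i ∈ l, CommLe R A x (y i)) :
    CommLe R ((l.map fun i => (n i).natAbs).sum * A) x (l.map fun i => y i ^ n i).prod := by
  induction l with
  | nil => simpa using commLe_one_right x
  | cons i l ih =>
    simp only [List.map_cons, List.prod_cons, List.sum_cons, Nat.cast_add, add_mul]
    exact ((h i (by simp)).zpow_right _).mul_right (ih fun j hj => h j (by simp [hj]))

theorem CommLe.conj (h : CommLe R A x y) (g : G) : CommLe R A (pconj x g) (pconj y g) := by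
  simpa only [CommLe, mul_pconj] using Near.conj h g

theorem CommLe.pconj_of_near_list_prod {κ : Type*} {l : List κ} {n : κ → ℤ} {f : κ → G} (x : G)
    (hy : Near R B (l.map fun i => pconj (y ^ n i) (f i)).prod y) (g : G)
    (hx : ∀ i ∈ l, CommLe R A x (pconj y (f i * g))) :
    CommLe R ((l.map fun i => (n i).natAbs).sum * A + 2 * B) x (pconj y g) := by
  have hprod := CommLe.list_prod_zpow_right l (fun i => pconj y (f i * g)) n hx
  have hexp := hy.conj g
  simp only [list_prod_pconj, List.map_map, Function.comp_def, zpow_pconj, ← pconj_mul] at hexp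
  exact hprod.congr_right hexp.symm

theorem commLe_pconj_inv_left_iff :
    CommLe R A (pconj x g⁻¹) y ↔ CommLe R A x (pconj y g) := by
  constructor <;> intro h
  · simpa [← pconj_mul, pconj_one] using h.conj g
  · simpa [← pconj_mul, pconj_one] using h.conj g⁻¹

theorem commLe_pcomm_swap (h : CommLe R A x (pcomm g y)) : CommLe R A x (pcomm y g) := by
  simpa [pcomm, mul_assoc] using h.inv_right

theorem CommLe.pcomm_inv_left (h : CommLe R A (pconj x V) (pcomm g y)) :
    CommLe R A (pconj x (V * y⁻¹)) (pcomm y⁻¹ g) := by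
  rw [pconj_mul]
  simpa [pconj, pcomm, mul_assoc] using h.conj y⁻¹

/-- `W * g * h = W * h * g * [g, h]`, and conjugation by `[g, h]` is almost trivial on `x ^ (V * g)`
if the two almost commute. -/
theorem Near.pconj_mul_swap (hWV : Near R A (pconj x (W * h)) (pconj x V))
    (hcomm : CommLe R B (pconj x (V * g)) (pcomm g h)) :
    Near R (A + B) (pconj x (W * g * h)) (pconj x (V * g)) := by
  have hswap : W * h * (g * pcomm g h) = W * g * h := by simp [pcomm, mul_assoc]
  have hmove := hWV.conj (g * pcomm g h)
  rw [← pconj_mul, hswap, ← pconj_mul, ← mul_assoc, pconj_mul x (V * g)] at hmove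
  exact hmove.trans (commLe_iff_near_pconj.1 hcomm)

end Near

/-! ### Ordered products of powers -/

section prodPow

variable {G : Type*} [Group G] {k : ℕ}

/-- The `ℓ¹` norm of an integer vector, i.e. the length of the ordered word with these
exponents. -/
def absSum (z : Fin k → ℤ) : ℕ := ∑ i, (z i).natAbs

theorem absSum_add_le (w v : Fin k → ℤ) : absSum (w + v) ≤ absSum w + absSum v := by
  rw [absSum, absSum, absSum, ← Finset.sum_add_distrib]
  exact Finset.sum_le_sum fun l _ => Int.natAbs_add_le _ _

theorem absSum_le_of_abs_le_sup_abs_add {q w v : Fin k → ℤ} (hq : |q| ≤ |w| ⊔ |w + v|) :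
    absSum q ≤ absSum w + absSum v := by
  rw [absSum, absSum, absSum, ← Finset.sum_add_distrib]
  refine Finset.sum_le_sum fun l _ => ?_
  have hql := hq l
  simp only [Pi.abs_apply, Pi.sup_apply, Pi.add_apply, Int.abs_eq_natAbs] at hql
  omega

theorem sum_natAbs_add_single (J : Finset (Fin k)) {z : Fin k → ℤ} {j : Fin k} (hj : j ∈ J)
    {s : ℤ} (hs : (z j + s).natAbs = (z j).natAbs + 1) :
    ∑ l ∈ J, ((z + Pi.single j s : Fin k → ℤ) l).natAbs = ∑ l ∈ J, (z l).natAbs + 1 := by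
  rw [← Finset.add_sum_erase J _ hj, ← Finset.add_sum_erase J (fun l => (z l).natAbs) hj,
    Pi.add_apply, Pi.single_eq_same, hs, add_right_comm]
  congr 2
  refine Finset.sum_congr rfl fun l hl => ?_
  rw [Pi.add_apply, Pi.single_eq_of_ne (Finset.ne_of_mem_erase hl), add_zero]

theorem abs_add_le_abs_add_single_add {y p : Fin k → ℤ} {j : Fin k} {s : ℤ}
    (hs : (y j + s).natAbs = (y j).natAbs + 1) (hp : p j = 0) :
    |y + p| ≤ |y + Pi.single j s + p| := by
  intro l
  obtain rfl | hl := eq_or_ne l j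
  · simp only [Pi.abs_apply, Pi.add_apply, Pi.single_eq_same, hp, Int.abs_eq_natAbs]
    omega
  · simp [hl]

theorem abs_add_le_sup_abs_add_add_single (w : Fin k → ℤ) {y : Fin k → ℤ} {j : Fin k} {s : ℤ}
    (hs : s.natAbs = 1) (hgrow : (y j + s).natAbs = (y j).natAbs + 1) :
    |w + y| ≤ |w| ⊔ |w + (y + Pi.single j s)| := by
  intro l
  obtain rfl | hl := eq_or_ne l j
  · simp only [Pi.abs_apply, Pi.add_apply, Pi.sup_apply, Pi.single_eq_same, Int.abs_eq_natAbs]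
    omega
  · simp [hl]

theorem exists_last_ne_zero {z : Fin k → ℤ} (hz : z ≠ 0) :
    ∃ j, z j ≠ 0 ∧ ∀ l, j < l → z l = 0 := by
  obtain ⟨i, hi⟩ := Function.ne_iff.1 hz
  obtain ⟨j, hj⟩ := (Finset.univ.filter fun l => z l ≠ 0).exists_maximal ⟨i, by simpa using hi⟩
  refine ⟨j, (Finset.mem_filter.1 hj.prop).2, fun l hl => ?_⟩
  by_contra h
  exact hl.not_ge (hj.le_of_ge (by simpa using h) hl.le)

/-- Induction on exponent vectors that builds the ordered word up from the left, one letter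
`t_j ^ s` with `s = ±1` at a time. -/
theorem induction_on_last_letter {P : (Fin k → ℤ) → Prop} (z : Fin k → ℤ) (zero : P 0)
    (add_single : ∀ (y : Fin k → ℤ) (j : Fin k) (s : ℤ), s.natAbs = 1 →
      (y j + s).natAbs = (y j).natAbs + 1 → (∀ l, j < l → y l = 0) → P y →
      P (y + Pi.single j s)) : P z := by
  induction hn : absSum z generalizing z with
  | zero =>
    have hz : z = 0 := funext fun i => by
      simpa using Finset.sum_eq_zero_iff.1 hn i (Finset.mem_univ i)
    rwa [hz]
  | succ n ih =>
    have hz : z ≠ 0 := by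
      rintro rfl
      simp [absSum] at hn
    obtain ⟨j, hj, hlast⟩ := exists_last_ne_zero hz
    set y := z - Pi.single j (z j).sign with hy
    have hzy : z = y + Pi.single j (z j).sign := (sub_add_cancel _ _).symm
    have hyj : y j = z j - (z j).sign := by rw [hy, Pi.sub_apply, Pi.single_eq_same]
    have hs : (z j).sign.natAbs = 1 := Int.natAbs_sign_of_ne_zero hj
    have hgrow : (y j + (z j).sign).natAbs = (y j).natAbs + 1 := by
      have := Int.sign_eq_one_of_pos (a := z j)
      have := Int.sign_eq_neg_one_of_neg (a := z j)
      omega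
    rw [hzy]
    refine add_single y j _ hs hgrow (fun l hl => ?_) (ih y ?_)
    · rw [hy, Pi.sub_apply, hlast l hl, Pi.single_eq_of_ne hl.ne', sub_zero]
    · rw [hzy, absSum, sum_natAbs_add_single _ (Finset.mem_univ j) hgrow] at hn
      exact Nat.succ_injective hn

/-- The ordered product `τ₁^{z₁} ⋯ τ_k^{z_k}` in an arbitrary group. -/
def prodPow (τ : Fin k → G) (z : Fin k → ℤ) : G :=
  (List.ofFn fun i => τ i ^ z i).prod

theorem prodPow_zero (τ : Fin k → G) : prodPow τ 0 = 1 := by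
  simp [prodPow]

theorem prodPow_succ (τ : Fin (k + 1) → G) (z : Fin (k + 1) → ℤ) :
    prodPow τ z = τ 0 ^ z 0 * prodPow (τ ∘ Fin.succ) (z ∘ Fin.succ) := by
  rw [prodPow, List.ofFn_succ, List.prod_cons]
  rfl

theorem prodPow_succ_last (τ : Fin (k + 1) → G) (z : Fin (k + 1) → ℤ) :
    prodPow τ z =
      prodPow (τ ∘ Fin.castSucc) (z ∘ Fin.castSucc) * τ (Fin.last k) ^ z (Fin.last k) := by
  rw [prodPow, List.ofFn_succ_last, List.prod_append, List.prod_singleton]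
  rfl

theorem prodPow_add_single (τ : Fin k → G) {z : Fin k → ℤ} {j : Fin k} (n : ℤ)
    (hz : ∀ l, j < l → z l = 0) : prodPow τ (z + Pi.single j n) = prodPow τ z * τ j ^ n := by
  induction k with
  | zero => exact j.elim0
  | succ k ih =>
    rw [prodPow_succ, prodPow_succ]
    cases j using Fin.cases with
    | zero =>
      have htail : z ∘ Fin.succ = 0 := funext fun l => hz _ (Fin.succ_pos l)
      have htail' : (z + Pi.single 0 n) ∘ Fin.succ = 0 := funext fun l => by
        simp [hz _ (Fin.succ_pos l)]
      rw [htail, htail', prodPow_zero, mul_one, mul_one, Pi.add_apply, Pi.single_eq_same, zpow_add]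
    | succ j =>
      have htail : (z + Pi.single j.succ n) ∘ Fin.succ = z ∘ Fin.succ + Pi.single j n :=
        funext fun l => by simp [Pi.single_apply]
      rw [htail, ih (τ ∘ Fin.succ) (z := z ∘ Fin.succ) (j := j) fun l hl =>
        hz _ (Fin.succ_lt_succ_iff.2 hl), ← mul_assoc, Pi.add_apply,
        Pi.single_eq_of_ne (Fin.succ_ne_zero j).symm, add_zero, Function.comp_apply]

theorem map_prodPow {H : Type*} [Group H] (φ : G →* H) (τ : Fin k → G) (z : Fin k → ℤ) :
    φ (prodPow τ z) = prodPow (φ ∘ τ) z := by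
  simp [prodPow, map_list_prod, List.map_ofFn, Function.comp_def]

/-- The exponent vector of the inverse of an ordered word, read in the reversed alphabet. -/
def negRev (z : Fin k → ℤ) : Fin k → ℤ := fun i => -z i.rev

theorem negRev_negRev (z : Fin k → ℤ) : negRev (negRev z) = z := by
  funext i
  simp [negRev]

theorem negRev_add (w v : Fin k → ℤ) : negRev (w + v) = negRev w + negRev v := by
  funext i
  simp [negRev, add_comm]

theorem absSum_negRev (z : Fin k → ℤ) : absSum (negRev z) = absSum z := by
  simpa [negRev, absSum] using Equiv.sum_comp Fin.revPerm fun i => (z i).natAbs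

theorem prodPow_rev_negRev (τ : Fin k → G) (z : Fin k → ℤ) :
    prodPow (τ ∘ Fin.rev) (negRev z) = (prodPow τ z)⁻¹ := by
  induction k with
  | zero => simp [prodPow]
  | succ k ih =>
    have hτ : (τ ∘ Fin.rev) ∘ Fin.castSucc = (τ ∘ Fin.succ) ∘ Fin.rev :=
      funext fun i => by simp [Fin.rev_castSucc]
    have hz : negRev z ∘ Fin.castSucc = negRev (z ∘ Fin.succ) :=
      funext fun i => by simp [negRev, Fin.rev_castSucc]
    rw [prodPow_succ_last, prodPow_succ, mul_inv_rev, hτ, hz, ih]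
    simp [negRev]

end prodPow

section mergeOrdered

variable {G : Type*} [Group G] {k : ℕ} {R : Set G} {τ : Fin k → G} {A X : ℝ} {s : ℤ}

theorem near_pconj_prodPow_mul (x : G) (i : Fin k) (z : Fin k → ℤ)
    (hq : ∀ q : Fin k → ℤ, |q| ≤ |z + Pi.single i 1| →
      Pairwise fun a b => CommLe R A (pconj x (prodPow τ q)) (pcomm (τ a) (τ b))) :
    Near R ((∑ l ∈ Finset.Ioi i, (z l).natAbs : ℕ) * A)
      (pconj x (prodPow τ z * τ i)) (pconj x (prodPow τ (z + Pi.single i 1))) := by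
  induction z using induction_on_last_letter with
  | zero =>
    rw [prodPow_add_single τ 1 (z := 0) fun _ _ => rfl, zpow_one]
    exact Near.refl _ (by simp)
  | add_single y j s hs hgrow hlast ih =>
    obtain hij | hji := lt_or_ge i j
    · have hz : prodPow τ (y + Pi.single j s) = prodPow τ y * τ j ^ s :=
        prodPow_add_single τ s hlast
      have hzi : prodPow τ (y + Pi.single j s + Pi.single i 1) =
          prodPow τ (y + Pi.single i 1) * τ j ^ s := by
        rw [add_right_comm, prodPow_add_single]
        intro l hl
        simp [hlast l hl, (hij.trans hl).ne']
      have hbox : |y + Pi.single i 1| ≤ |y + Pi.single j s + Pi.single i 1| :=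
        abs_add_le_abs_add_single_add hgrow (Pi.single_eq_of_ne hij.ne' 1)
      have hcomm : CommLe R A (pconj x (prodPow τ (y + Pi.single i 1) * τ j ^ s))
          (pcomm (τ j ^ s) (τ i)) := by
        obtain rfl | rfl : s = 1 ∨ s = -1 := by omega
        · rw [← hzi, zpow_one]
          exact hq _ le_rfl hij.ne'
        · rw [zpow_neg, zpow_one]
          exact (hq _ hbox hij.ne).pcomm_inv_left
      rw [hz, hzi, sum_natAbs_add_single _ (Finset.mem_Ioi.2 hij) hgrow]
      exact ((ih fun q hqy => hq q (hqy.trans hbox)).pconj_mul_swap hcomm).mono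
        (by push_cast; linarith)
    · have htail : ∀ l, i < l → (y + Pi.single j s : Fin k → ℤ) l = 0 := fun l hl => by
        simp [hlast l (hji.trans_lt hl), (hji.trans_lt hl).ne']
      rw [prodPow_add_single τ 1 htail, zpow_one,
        Finset.sum_eq_zero fun l hl => by rw [htail l (Finset.mem_Ioi.1 hl), Int.natAbs_zero]]
      exact Near.refl _ (by simp)

theorem near_pconj_prodPow_mul_zpow (x : G) (i : Fin k) (hs : s.natAbs = 1) (z : Fin k → ℤ)
    (hq : ∀ q : Fin k → ℤ, |q| ≤ |z| ∨ |q| ≤ |z + Pi.single i s| →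
      Pairwise fun a b => CommLe R A (pconj x (prodPow τ q)) (pcomm (τ a) (τ b))) :
    Near R ((∑ l ∈ Finset.Ioi i, (z l).natAbs : ℕ) * A)
      (pconj x (prodPow τ z * τ i ^ s)) (pconj x (prodPow τ (z + Pi.single i s))) := by
  obtain rfl | rfl : s = 1 ∨ s = -1 := by omega
  · rw [zpow_one]
    exact near_pconj_prodPow_mul x i z fun q h => hq q (Or.inr h)
  · set y := z + Pi.single i (-1) with hy
    have hyz : y + Pi.single i 1 = z := by
      rw [hy, add_assoc, ← Pi.single_add, neg_add_cancel, Pi.single_zero, add_zero]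
    have htail : ∑ l ∈ Finset.Ioi i, (y l).natAbs = ∑ l ∈ Finset.Ioi i, (z l).natAbs :=
      Finset.sum_congr rfl fun l hl => by simp [hy, (Finset.mem_Ioi.1 hl).ne']
    have hmove := near_pconj_prodPow_mul x i y fun q h => hq q (Or.inl (hyz ▸ h))
    rw [hyz, htail] at hmove
    simpa [← pconj_mul] using (hmove.conj (τ i)⁻¹).symm

/-- The word on the right is appended letter by letter. As the bound for the commutators doubles
with every letter, the total cost is at most twice that of the last letter. -/
theorem near_pconj_prodPow_mul_prodPow (hX : 0 ≤ X) (x : G) (w v : Fin k → ℤ)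
    (hq : ∀ q : Fin k → ℤ, |q| ≤ |w| ⊔ |w + v| → Pairwise fun a b =>
      CommLe R (X * 2 ^ absSum q) (pconj x (prodPow τ q)) (pcomm (τ a) (τ b))) :
    Near R (2 * absSum w * X * 2 ^ (absSum w + absSum v))
      (pconj x (prodPow τ w * prodPow τ v)) (pconj x (prodPow τ (w + v))) := by
  induction v using induction_on_last_letter with
  | zero =>
    rw [prodPow_zero, mul_one, add_zero]
    exact Near.refl _ (by positivity)
  | add_single y j s hs hgrow hlast ih =>
    have hlen : absSum (y + Pi.single j s) = absSum y + 1 :=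
      sum_natAbs_add_single _ (Finset.mem_univ j) hgrow
    have hbox : |w + y| ≤ |w| ⊔ |w + (y + Pi.single j s)| :=
      abs_add_le_sup_abs_add_add_single w hs hgrow
    have hinit : Near R (2 * absSum w * X * 2 ^ (absSum w + absSum y))
        (pconj x (prodPow τ w * prodPow τ (y + Pi.single j s)))
        (pconj x (prodPow τ (w + y) * τ j ^ s)) := by
      rw [prodPow_add_single τ s hlast, ← mul_assoc (prodPow τ w), pconj_mul,
        pconj_mul x (prodPow τ (w + y))]
      exact (ih fun q h => hq q (h.trans (sup_le le_sup_left hbox))).conj _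
    have hletter : Near R (absSum w * (X * 2 ^ (absSum w + (absSum y + 1))))
        (pconj x (prodPow τ (w + y) * τ j ^ s))
        (pconj x (prodPow τ (w + (y + Pi.single j s)))) := by
      have htail : ∑ l ∈ Finset.Ioi j, ((w + y) l).natAbs ≤ absSum w := by
        rw [Finset.sum_congr rfl fun l hl => by
          rw [Pi.add_apply, hlast l (Finset.mem_Ioi.1 hl), add_zero]]
        exact Finset.sum_le_sum_of_subset (Finset.subset_univ _)
      rw [← add_assoc w]
      refine (near_pconj_prodPow_mul_zpow x j hs (w + y) fun q h a b hab => ?_).mono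
        (mul_le_mul_of_nonneg_right (Nat.cast_le.2 htail) (by positivity))
      rw [add_assoc w] at h
      have hqbox : |q| ≤ |w| ⊔ |w + (y + Pi.single j s)| :=
        h.elim (fun h => h.trans hbox) fun h => h.trans le_sup_right
      refine (hq q hqbox hab).mono ?_
      rw [← hlen]
      gcongr
      · norm_num
      · exact absSum_le_of_abs_le_sup_abs_add hqbox
    exact (hinit.trans hletter).mono (le_of_eq (by rw [hlen]; ring))

end mergeOrdered

/-! ### Euclidean norms and the descent -/

section normV

variable {k : ℕ}

theorem normV_eq_norm (v : Fin k → ℤ) : normV v = ‖WithLp.toLp 2 fun i => (v i : ℝ)‖ := by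
  simp [normV, EuclideanSpace.norm_eq]

theorem normV_nonneg (v : Fin k → ℤ) : 0 ≤ normV v := Real.sqrt_nonneg _

theorem normV_sq (v : Fin k → ℤ) : normV v ^ 2 = ∑ i, (v i : ℝ) ^ 2 :=
  Real.sq_sqrt (Finset.sum_nonneg fun _ _ => sq_nonneg _)

theorem normV_mono {q z : Fin k → ℤ} (h : |q| ≤ |z|) : normV q ≤ normV z :=
  Real.sqrt_le_sqrt <| Finset.sum_le_sum fun i _ => sq_le_sq.2 (by exact_mod_cast h i)

theorem normV_sq_le_of_abs_le_sup {q z z' : Fin k → ℤ} (h : |q| ≤ |z| ⊔ |z'|) :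
    normV q ^ 2 ≤ normV z ^ 2 + normV z' ^ 2 := by
  simp only [normV_sq, ← Finset.sum_add_distrib]
  refine Finset.sum_le_sum fun i _ => ?_
  obtain hi | hi := le_sup_iff.1 (h i)
  · exact (sq_le_sq.2 (by exact_mod_cast hi)).trans (le_add_of_nonneg_right (sq_nonneg _))
  · exact (sq_le_sq.2 (by exact_mod_cast hi)).trans (le_add_of_nonneg_left (sq_nonneg _))

theorem normV_negRev (z : Fin k → ℤ) : normV (negRev z) = normV z := by
  simpa [normV, negRev] using
    congrArg Real.sqrt (Equiv.sum_comp Fin.revPerm fun i => (z i : ℝ) ^ 2)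

theorem natAbs_le_normV (z : Fin k → ℤ) (i : Fin k) : ((z i).natAbs : ℝ) ≤ normV z := by
  rw [Nat.cast_natAbs, Int.cast_abs, normV, ← Real.sqrt_sq_eq_abs]
  exact Real.sqrt_le_sqrt (Finset.single_le_sum (f := fun i => (z i : ℝ) ^ 2)
    (fun _ _ => sq_nonneg _) (Finset.mem_univ i))

theorem absSum_le_mul_normV (z : Fin k → ℤ) : (absSum z : ℝ) ≤ k * normV z := by
  rw [absSum, Nat.cast_sum]
  refine (Finset.sum_le_card_nsmul _ _ (normV z) fun i _ => natAbs_le_normV z i).trans ?_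
  simp

theorem normV_le_absSum (z : Fin k → ℤ) : normV z ≤ absSum z := by
  rw [normV, Real.sqrt_le_left (Nat.cast_nonneg _), absSum, Nat.cast_sum]
  simpa only [Nat.cast_natAbs, Int.cast_abs, sq_abs] using
    Finset.sum_sq_le_sq_sum_of_nonneg (s := Finset.univ) (f := fun i => ((z i).natAbs : ℝ))
      fun _ _ => Nat.cast_nonneg _

end normV

section Descent

open scoped RealInnerProductSpace

variable {E : Type*} [NormedAddCommGroup E] [InnerProductSpace ℝ E]

theorem exists_pos_mul_norm_le_inner [ProperSpace E] {ι : Type*} (s : ι → Finset E)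
    (hs : ∀ x : E, x ≠ 0 → ∃ i, ∀ v ∈ s i, 0 < ⟪x, v⟫) :
    ∃ μ > 0, ∀ x : E, x ≠ 0 → ∃ i, ∀ v ∈ s i, μ * ‖x‖ ≤ ⟪x, v⟫ := by
  obtain ⟨μ, hμ, h⟩ : ∃ μ > 0, ∀ x ∈ Metric.sphere (0 : E) 1, ∃ i, ∀ v ∈ s i, μ ≤ ⟪x, v⟫ := by
    refine (isCompact_sphere (0 : E) 1).induction_on
      (p := fun S => ∃ μ > 0, ∀ x ∈ S, ∃ i, ∀ v ∈ s i, μ ≤ ⟪x, v⟫) ⟨1, one_pos, by simp⟩ ?_ ?_ ?_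
    · rintro S S' hSS' ⟨μ, hμ, h⟩
      exact ⟨μ, hμ, fun x hx => h x (hSS' hx)⟩
    · rintro S S' ⟨μ, hμ, h⟩ ⟨μ', hμ', h'⟩
      refine ⟨min μ μ', lt_min hμ hμ', fun x hx => ?_⟩
      obtain hx | hx := hx
      · exact (h x hx).imp fun i hi v hv => min_le_of_left_le (hi v hv)
      · exact (h' x hx).imp fun i hi v hv => min_le_of_right_le (hi v hv)
    · intro x hx
      obtain ⟨i, hi⟩ := hs x (ne_zero_of_mem_unit_sphere ⟨x, hx⟩)
      obtain ⟨μ, hμi, hμ⟩ : ∃ μ, (∀ v ∈ s i, μ < ⟪x, v⟫) ∧ 0 < μ :=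
        (((Filter.eventually_all_finset _).2 fun v hv => eventually_nhdsWithin_of_eventually_nhds
          (eventually_lt_nhds (hi v hv))).and (self_mem_nhdsWithin (s := Set.Ioi 0))).exists
      refine ⟨{y | ∀ v ∈ s i, μ < ⟪y, v⟫}, mem_nhdsWithin_of_mem_nhds ?_, μ, hμ,
        fun y hy => ⟨i, fun v hv => (hy v hv).le⟩⟩
      exact (Filter.eventually_all_finset _).2 fun v hv =>
        (continuous_id.inner continuous_const).continuousAt.eventually_const_lt (hμi v hv)
  refine ⟨μ, hμ, fun x hx => ?_⟩
  obtain ⟨i, hi⟩ := h (‖x‖⁻¹ • x) (by simp [norm_smul, hx])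
  refine ⟨i, fun v hv => ?_⟩
  have := hi v hv
  rw [real_inner_smul_left, inv_mul_eq_div, le_div_iff₀ (norm_pos_iff.2 hx)] at this
  exact this

/-- The inner product of `-x` with `v` grows linearly in `‖x‖`, so `v` shortens a long vector `x` by
a definite amount, leaving room for the bounded `‖v‖ ^ 2`. -/
theorem exists_norm_sq_add_norm_add_sq_le [ProperSpace E] {ι : Type*} (s : ι → Finset E) {M : ℝ}
    (hM : ∀ i, ∀ v ∈ s i, ‖v‖ ≤ M)
    (hs : ∀ x : E, x ≠ 0 → ∃ i, ∀ v ∈ s i, 0 < ⟪x, v⟫) :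
    ∃ ε ρ₀ : ℝ, 0 < ε ∧ ε ≤ ρ₀ ∧ ∀ x : E, ρ₀ ≤ ‖x‖ →
      ∃ i, ∀ v ∈ s i, ‖v‖ ^ 2 + ‖v + x‖ ^ 2 ≤ (‖x‖ - ε) ^ 2 := by
  obtain ⟨μ, hμ, h⟩ := exists_pos_mul_norm_le_inner s hs
  refine ⟨μ / 2, μ + 2 * M ^ 2 / μ, by positivity, ?_, fun x hx => ?_⟩
  · have : 0 ≤ 2 * M ^ 2 / μ := by positivity
    linarith
  · have hx0 : 0 < ‖x‖ := lt_of_lt_of_le (by positivity) hx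
    obtain ⟨i, hi⟩ := h (-x) (neg_ne_zero.2 (norm_pos_iff.1 hx0))
    refine ⟨i, fun v hv => ?_⟩
    have hinner : ⟪v, x⟫ ≤ -(μ * ‖x‖) := by
      have := hi v hv
      rw [norm_neg, inner_neg_left, real_inner_comm] at this
      linarith
    have hvM : ‖v‖ ^ 2 ≤ M ^ 2 := by gcongr; exact hM i v hv
    have hlong : 2 * M ^ 2 ≤ μ * ‖x‖ := by
      have : 2 * M ^ 2 / μ ≤ ‖x‖ := by linarith
      rwa [div_le_iff₀ hμ, mul_comm ‖x‖] at this
    have hsq : ‖v + x‖ ^ 2 = ‖v‖ ^ 2 + 2 * ⟪v, x⟫ + ‖x‖ ^ 2 := norm_add_sq_real v x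
    nlinarith [sq_nonneg μ]

end Descent

theorem TameCond.exists_descent {k : ℕ} {L : Finset ((Fin k → ℤ) →₀ ℤ)} (htame : TameCond L) :
    ∃ ε ρ₀ : ℝ, 0 < ε ∧ ε ≤ ρ₀ ∧ ∀ v : Fin k → ℤ, ρ₀ ≤ normV v →
      ∃ lam ∈ L, ∀ w ∈ lam.support, normV w ^ 2 + normV (w + v) ^ 2 ≤ (normV v - ε) ^ 2 := by
  classical
  let e : (Fin k → ℤ) → EuclideanSpace ℝ (Fin k) := fun v => WithLp.toLp 2 fun i => (v i : ℝ)
  have he (v : Fin k → ℤ) : normV v = ‖e v‖ := normV_eq_norm v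
  let s : L → Finset (EuclideanSpace ℝ (Fin k)) := fun lam => lam.1.support.image e
  obtain ⟨M, hM⟩ := (Finset.univ.biUnion s).finite_toSet.isBounded.exists_norm_le
  have hs (x : EuclideanSpace ℝ (Fin k)) (hx : x ≠ 0) :
      ∃ lam, ∀ v ∈ s lam, 0 < inner ℝ x v := by
    obtain ⟨lam, hlam, h⟩ := htame x.ofLp ((WithLp.ofLp_eq_zero 2).not.2 hx)
    refine ⟨⟨lam, hlam⟩, Finset.forall_mem_image.2 fun v hv => ?_⟩
    simpa [PiLp.inner_apply, e, mul_comm] using h v hv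
  obtain ⟨ε, ρ₀, hε, hρ₀, h⟩ := exists_norm_sq_add_norm_add_sq_le s
    (fun lam v hv => hM v (Finset.mem_biUnion.2 ⟨lam, Finset.mem_univ _, hv⟩)) hs
  refine ⟨ε, ρ₀, hε, hρ₀, fun v hv => ?_⟩
  obtain ⟨lam, hlam⟩ := h (e v) (he v ▸ hv)
  refine ⟨lam, lam.2, fun w hw => ?_⟩
  have hadd : e (w + v) = e w + e v := by
    ext i
    simp [e]
  rw [he, he, he, hadd]
  exact hlam _ (Finset.mem_image_of_mem e hw)

/-! ### Commutators of the conjugates -/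

section BallCommBound

variable {G ι : Type*} [Group G] {k M : ℕ} {R : Set G} {τ : Fin k → G} {α : ι → G} {X r : ℝ}
  {w v : Fin k → ℤ}

/-- The commutators `[τ i, τ j]` of distinct letters are near elements `(α e) ^ ±1`. Both signs are
allowed so that the condition survives reversing the order of the letters. -/
def CommutatorsNear (R : Set G) (τ : Fin k → G) (α : ι → G) : Prop :=
  Pairwise fun i j =>
    ∃ e, Near R 1 (pcomm (τ i) (τ j)) (α e) ∨ Near R 1 (pcomm (τ j) (τ i)) (α e)

theorem CommutatorsNear.commLe_pcomm {A : ℝ} {y : G} (hτ : CommutatorsNear R τ α)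
    (hy : ∀ e, CommLe R A y (α e)) :
    Pairwise fun i j => CommLe R (A + 2) y (pcomm (τ i) (τ j)) := by
  intro i j hij
  obtain ⟨e, he | he⟩ := hτ hij
  · exact ((hy e).congr_right he).mono (by linarith)
  · exact (commLe_pcomm_swap ((hy e).congr_right he)).mono (by linarith)

theorem CommutatorsNear.comp_rev (hτ : CommutatorsNear R τ α) :
    CommutatorsNear R (τ ∘ Fin.rev) α :=
  hτ.comp_of_injective Fin.rev_injective

/-- The conjugates of the `α b` by the ordered words with exponents in the ball of radius `r` almost
commute with the `α a`. The weight `2 ^ absSum q` is what makes the total cost of merging two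
ordered words, a geometric sum, comparable to the cost of its last step. -/
def BallCommBound (R : Set G) (τ : Fin k → G) (α : ι → G) (X r : ℝ) : Prop :=
  ∀ q : Fin k → ℤ, normV q ≤ r → ∀ a b,
    CommLe R (X * 2 ^ absSum q) (α a) (pconj (α b) (prodPow τ q))

theorem BallCommBound.comp_rev (h : BallCommBound R τ α X r) :
    BallCommBound R (τ ∘ Fin.rev) α X r := by
  intro q hq a b
  rw [← negRev_negRev q, prodPow_rev_negRev, absSum_negRev]
  exact (commLe_pconj_inv_left_iff.2 (h _ ((normV_negRev q).trans_le hq) b a)).symm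

theorem BallCommBound.near_pconj_mul (h : BallCommBound R τ α X r) (hτ : CommutatorsNear R τ α)
    (hX : 0 ≤ X) (hr : 0 ≤ r) (hwv : normV w ^ 2 + normV (w + v) ^ 2 ≤ r ^ 2) (b : ι) :
    Near R (2 * absSum w * (X + 2) * 2 ^ (absSum w + absSum v))
      (pconj (α b) (prodPow τ w * prodPow τ v)) (pconj (α b) (prodPow τ (w + v))) := by
  refine near_pconj_prodPow_mul_prodPow (by positivity) _ w v fun q hq i j hij => ?_
  have hqr : normV q ≤ r :=
    (sq_le_sq₀ (normV_nonneg q) hr).1 ((normV_sq_le_of_abs_le_sup hq).trans hwv)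
  refine (hτ.commLe_pcomm (fun e => (h q hqr e b).symm) hij).mono ?_
  have : (1 : ℝ) ≤ 2 ^ absSum q := one_le_pow₀ one_le_two
  linarith

theorem BallCommBound.commLe_pconj_mul (h : BallCommBound R τ α X r) (hτ : CommutatorsNear R τ α)
    (hX : 1 ≤ X) (hr : 0 ≤ r) (hwv : normV w ^ 2 + normV (w + v) ^ 2 ≤ r ^ 2)
    (hw : absSum w ≤ M) (a b : ι) :
    CommLe R (X * ((1 + 12 * M) * 2 ^ M) * 2 ^ absSum v) (α a)
      (pconj (α b) (prodPow τ w * prodPow τ v)) := by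
  have hwvr : normV (w + v) ≤ r :=
    (sq_le_sq₀ (normV_nonneg _) hr).1 ((le_add_of_nonneg_left (sq_nonneg _)).trans hwv)
  have hnear := h.near_pconj_mul hτ (zero_le_one.trans hX) hr hwv b
  refine ((h _ hwvr a b).congr_right hnear).mono ?_
  have hsum : (2 : ℝ) ^ absSum (w + v) ≤ 2 ^ (M + absSum v) :=
    pow_le_pow_right₀ one_le_two ((absSum_add_le w v).trans (by gcongr))
  calc X * 2 ^ absSum (w + v) + 2 * (2 * absSum w * (X + 2) * 2 ^ (absSum w + absSum v))
      ≤ X * 2 ^ (M + absSum v) + 2 * (2 * M * (X + 2 * X) * 2 ^ (M + absSum v)) := by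
        gcongr
        · linarith
        · norm_num
    _ = X * ((1 + 12 * M) * 2 ^ M) * 2 ^ absSum v := by ring

theorem BallCommBound.commLe_pconj_inv (h : BallCommBound R τ α X r) (hτ : CommutatorsNear R τ α)
    (hX : 1 ≤ X) (hr : 0 ≤ r) (hwv : normV w ^ 2 + normV (w + v) ^ 2 ≤ r ^ 2)
    (hw : absSum w ≤ M) (a b : ι) :
    CommLe R (X * ((1 + 12 * M) * 2 ^ M) * 2 ^ absSum v) (pconj (α a) (prodPow τ w)⁻¹)
      (pconj (α b) (prodPow τ v)) := by
  have hrev := h.comp_rev.commLe_pconj_mul (w := negRev w) (v := negRev v) hτ.comp_rev hX hr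
    (by rwa [← negRev_add, normV_negRev, normV_negRev]) ((absSum_negRev w).trans_le hw) b a
  rw [prodPow_rev_negRev, prodPow_rev_negRev, absSum_negRev, pconj_mul,
    ← commLe_pconj_inv_left_iff, inv_inv] at hrev
  exact hrev.symm

end BallCommBound

section TameRelations

variable {G ι : Type*} [Group G] {k M : ℕ} {R : Set G} {τ : Fin k → G} {α : ι → G}
  {L : Finset ((Fin k → ℤ) →₀ ℤ)} {ρ ρ₀ ε X r : ℝ} {lam : (Fin k → ℤ) →₀ ℤ} {v : Fin k → ℤ}
  {l : List (Fin k → ℤ)}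

/-- What the relators of `H(ρ, ℛ)` say about the generators `τ` and `α`, for an arbitrary set `R`
of relators in an arbitrary group. -/
structure TameRelations (R : Set G) (τ : Fin k → G) (α : ι → G) (L : Finset ((Fin k → ℤ) →₀ ℤ))
    (ρ : ℝ) : Prop where
  commutatorsNear : CommutatorsNear R τ α
  commLe_of_lt : ∀ v : Fin k → ℤ, normV v < ρ → ∀ a b,
    CommLe R 1 (α a) (pconj (α b) (prodPow τ v))
  near_expansion : ∀ lam ∈ L, ∃ l : List (Fin k → ℤ), (l.Nodup ∧ ∀ v, v ∈ l ↔ v ∈ lam.support) ∧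
    ((∀ a, Near R 1 (l.map fun w => pconj (α a ^ lam w) (prodPow τ w)).prod (α a)) ∨
      ∀ a, Near R 1 (l.map fun w => pconj (α a ^ lam w) (prodPow τ w)⁻¹).prod (α a))

theorem list_sum_natAbs_eq_sum_support (hl : l.Nodup ∧ ∀ v, v ∈ l ↔ v ∈ lam.support) :
    (l.map fun w => (lam w).natAbs).sum = ∑ w ∈ lam.support, (lam w).natAbs := by
  have hsupp : lam.support = l.toFinset := Finset.ext fun v => by rw [List.mem_toFinset, hl.2]
  rw [hsupp, List.sum_toFinset _ hl.1]

/-- The factor by which the bound on commutators grows when the radius of the ball grows by the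
descent constant; `M` bounds the `ℓ¹` norms of the `λ ∈ L` and of their exponents. -/
def growth (M : ℕ) : ℝ := M * ((1 + 12 * M) * 2 ^ M) + 2

theorem one_le_growth (M : ℕ) : 1 ≤ growth M := by
  have : (0 : ℝ) ≤ M * ((1 + 12 * M) * 2 ^ M) := by positivity
  rw [growth]
  linarith

theorem TameRelations.commLe_of_descent (hR : TameRelations R τ α L ρ)
    (h : BallCommBound R τ α X r) (hX : 1 ≤ X) (hr : 0 ≤ r) (hlam : lam ∈ L)
    (hM : ∀ w ∈ lam.support, absSum w ≤ M) (hM' : ∑ w ∈ lam.support, (lam w).natAbs ≤ M)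
    (hv : ∀ w ∈ lam.support, normV w ^ 2 + normV (w + v) ^ 2 ≤ r ^ 2) (a b : ι) :
    CommLe R (growth M * X * 2 ^ absSum v) (α a) (pconj (α b) (prodPow τ v)) := by
  obtain ⟨l, hl, hexp⟩ := hR.near_expansion lam hlam
  have hcost : (l.map fun w => (lam w).natAbs).sum *
      (X * ((1 + 12 * M) * 2 ^ M) * 2 ^ absSum v) + 2 * 1 ≤ growth M * X * 2 ^ absSum v := by
    have hone : 1 ≤ X * 2 ^ absSum v := one_le_mul_of_one_le_of_one_le hX (one_le_pow₀ one_le_two)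
    calc _ ≤ M * (X * ((1 + 12 * M) * 2 ^ M) * 2 ^ absSum v) + 2 * (X * 2 ^ absSum v) := by
          rw [list_sum_natAbs_eq_sum_support hl]
          gcongr
      _ = growth M * X * 2 ^ absSum v := by rw [growth]; ring
  obtain hexp | hexp := hexp
  · refine (CommLe.pconj_of_near_list_prod _ (hexp b) _ fun w hw => ?_).mono hcost
    rw [hl.2] at hw
    exact h.commLe_pconj_mul hR.commutatorsNear hX hr (hv w hw) (hM w hw) a b
  · have hone := CommLe.pconj_of_near_list_prod (pconj (α b) (prodPow τ v)) (hexp a) 1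
      fun w hw => by
      rw [hl.2] at hw
      rw [mul_one]
      exact (h.commLe_pconj_inv hR.commutatorsNear hX hr (hv w hw) (hM w hw) a b).symm
    rw [pconj_one] at hone
    exact hone.symm.mono hcost

theorem TameRelations.ballCommBound_add (hR : TameRelations R τ α L ρ) (hε : ε ≤ ρ₀) (hρ : ρ₀ ≤ ρ)
    (hdesc : ∀ v : Fin k → ℤ, ρ₀ ≤ normV v →
      ∃ lam ∈ L, ∀ w ∈ lam.support, normV w ^ 2 + normV (w + v) ^ 2 ≤ (normV v - ε) ^ 2)
    (hM : ∀ lam ∈ L, (∀ w ∈ lam.support, absSum w ≤ M) ∧ ∑ w ∈ lam.support, (lam w).natAbs ≤ M)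
    (hX : 1 ≤ X) (h : BallCommBound R τ α X r) :
    BallCommBound R τ α (growth M * X) (r + ε) := by
  intro v hv a b
  obtain hvρ | hvρ := lt_or_ge (normV v) ρ
  · refine (hR.commLe_of_lt v hvρ a b).mono ?_
    exact one_le_mul_of_one_le_of_one_le
      (one_le_mul_of_one_le_of_one_le (one_le_growth M) hX) (one_le_pow₀ one_le_two)
  · obtain ⟨lam, hlam, hw⟩ := hdesc v (hρ.trans hvρ)
    have hr : normV v - ε ≤ r := by linarith
    have hr' : 0 ≤ normV v - ε := by linarith
    exact hR.commLe_of_descent h hX (hr'.trans hr) hlam (hM lam hlam).1 (hM lam hlam).2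
      (fun w hws => (hw w hws).trans (pow_le_pow_left₀ hr' hr 2)) a b

theorem TameRelations.ballCommBound_pow (hR : TameRelations R τ α L ρ) (hε₀ : 0 < ε) (hε : ε ≤ ρ₀)
    (hρ : ρ₀ ≤ ρ)
    (hdesc : ∀ v : Fin k → ℤ, ρ₀ ≤ normV v →
      ∃ lam ∈ L, ∀ w ∈ lam.support, normV w ^ 2 + normV (w + v) ^ 2 ≤ (normV v - ε) ^ 2)
    (hM : ∀ lam ∈ L, (∀ w ∈ lam.support, absSum w ≤ M) ∧ ∑ w ∈ lam.support, (lam w).natAbs ≤ M)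
    (n : ℕ) : BallCommBound R τ α (growth M ^ n) (n * ε) := by
  induction n with
  | zero =>
    intro q hq a b
    have hqρ : normV q < ρ := by
      rw [Nat.cast_zero, zero_mul] at hq
      linarith
    exact (hR.commLe_of_lt q hqρ a b).mono
      (one_le_mul_of_one_le_of_one_le (one_le_pow₀ (one_le_growth M)) (one_le_pow₀ one_le_two))
  | succ n ih =>
    rw [pow_succ', Nat.cast_succ, add_one_mul]
    exact hR.ballCommBound_add hε hρ hdesc hM (one_le_pow₀ (one_le_growth M)) ih

theorem exists_forall_absSum_le (L : Finset ((Fin k → ℤ) →₀ ℤ)) :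
    ∃ M : ℕ, ∀ lam ∈ L, (∀ w ∈ lam.support, absSum w ≤ M) ∧
      ∑ w ∈ lam.support, (lam w).natAbs ≤ M := by
  refine ⟨L.sup fun lam => lam.support.sup absSum ⊔ ∑ w ∈ lam.support, (lam w).natAbs,
    fun lam hlam => ?_⟩
  have hle := Finset.le_sup hlam
    (f := fun lam => lam.support.sup absSum ⊔ ∑ w ∈ lam.support, (lam w).natAbs)
  exact ⟨fun w hw => (Finset.le_sup hw).trans (le_sup_left.trans hle), le_sup_right.trans hle⟩

end TameRelations

theorem TameCond.exists_commLe {k : ℕ} {L : Finset ((Fin k → ℤ) →₀ ℤ)} (htame : TameCond L) :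
    ∃ ρ₀ C : ℝ, 0 < ρ₀ ∧ 1 ≤ C ∧ ∀ {G ι : Type*} [Group G] {R : Set G} {τ : Fin k → G}
      {α : ι → G} {ρ : ℝ}, ρ₀ ≤ ρ → TameRelations R τ α L ρ →
      ∀ (n : ℕ) (q : Fin k → ℤ), normV q ≤ n → ∀ a b,
        CommLe R (C ^ n) (α a) (pconj (α b) (prodPow τ q)) := by
  obtain ⟨ε, ρ₀, hε₀, hε, hdesc⟩ := htame.exists_descent
  obtain ⟨M, hM⟩ := exists_forall_absSum_le L
  obtain ⟨N, hN⟩ := exists_nat_ge (1 / ε)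
  rw [div_le_iff₀ hε₀] at hN
  refine ⟨ρ₀, growth M ^ N * 2 ^ k, hε₀.trans_le hε, one_le_mul_of_one_le_of_one_le
    (one_le_pow₀ (one_le_growth M)) (one_le_pow₀ one_le_two), fun hρ hR n q hq a b => ?_⟩
  have hball : normV q ≤ (N * n : ℕ) * ε := by
    calc normV q ≤ 1 * n := by rwa [one_mul]
      _ ≤ N * ε * n := by gcongr
      _ = (N * n : ℕ) * ε := by push_cast; ring
  refine (hR.ballCommBound_pow hε₀ hε hρ hdesc hM (N * n) q hball a b).mono ?_
  have habs : absSum q ≤ k * n := by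
    have hreal : (absSum q : ℝ) ≤ k * n := (absSum_le_mul_normV q).trans (by gcongr)
    exact_mod_cast hreal
  rw [mul_pow, ← pow_mul, ← pow_mul]
  have := one_le_growth M
  gcongr
  norm_num


/-! ### Ordering a word -/

section Ordering

variable {G : Type*} [Group G] {k n : ℕ} {R : Set G} {τ : Fin k → G} {A : ℝ}

theorem expVec_one : expVec (1 : FreeGroup (Fin k)) = 0 := by
  simp [expVec]

theorem expVec_mul (u v : FreeGroup (Fin k)) : expVec (u * v) = expVec u + expVec v := by
  simp [expVec]

theorem expVec_of_zpow (i : Fin k) (s : ℤ) : expVec (FreeGroup.of i ^ s) = Pi.single i s := by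
  rw [expVec, theta, map_zpow, FreeGroup.lift_apply_of, ← ofAdd_zsmul, toAdd_ofAdd,
    ← Pi.single_smul, smul_eq_mul, mul_one]

theorem exists_mk_singleton_eq_zpow (x : Fin k × Bool) :
    ∃ s : ℤ, s.natAbs = 1 ∧ FreeGroup.mk [x] = FreeGroup.of x.1 ^ s := by
  obtain ⟨i, _ | _⟩ := x
  · exact ⟨-1, rfl, by rw [zpow_neg, zpow_one]; rfl⟩
  · exact ⟨1, rfl, by rw [zpow_one]; rfl⟩

theorem absSum_expVec_mk_le (p : List (Fin k × Bool)) :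
    absSum (expVec (FreeGroup.mk p)) ≤ p.length := by
  induction p with
  | nil => simp [absSum, expVec_one, ← FreeGroup.one_eq_mk]
  | cons x p ih =>
    obtain ⟨s, hs, hx⟩ := exists_mk_singleton_eq_zpow x
    have hsingle : absSum (Pi.single x.1 s : Fin k → ℤ) = 1 := by
      rw [absSum, Finset.sum_eq_single x.1 (fun l _ hl => by simp [hl]) (by simp),
        Pi.single_eq_same, hs]
    rw [← List.singleton_append, ← FreeGroup.mul_mk, expVec_mul, hx, expVec_of_zpow,
      List.length_append, List.length_singleton]
    exact (absSum_add_le _ _).trans (by omega)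

theorem traceInBall_succ_of_norm_le {u : FreeGroup (Fin k)} (hu : u.norm ≤ n) :
    TraceInBall u (n + 1) := by
  intro p hp
  have hpn : absSum (expVec (FreeGroup.mk p)) ≤ n :=
    (absSum_expVec_mk_le p).trans (hp.length_le.trans hu)
  exact ((normV_le_absSum _).trans (Nat.cast_le.2 hpn)).trans_lt (Nat.cast_lt.2 n.lt_succ_self)

theorem near_pconj_lift_mk (hA : 0 ≤ A) (x : G)
    (hcomm : ∀ q : Fin k → ℤ, normV q < n →
      Pairwise fun i j => CommLe R A (pconj x (prodPow τ q)) (pcomm (τ i) (τ j)))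
    (p : List (Fin k × Bool)) (hp : ∀ p', p' <+: p → normV (expVec (FreeGroup.mk p')) < n) :
    Near R (p.length * (k * n * A)) (pconj x (FreeGroup.lift τ (FreeGroup.mk p)))
      (pconj x (prodPow τ (expVec (FreeGroup.mk p)))) := by
  induction p using List.reverseRecOn with
  | nil =>
    rw [← FreeGroup.one_eq_mk, map_one, expVec_one, prodPow_zero]
    exact Near.refl _ (by simp)
  | append_singleton p y ih =>
    obtain ⟨s, hs, hy⟩ := exists_mk_singleton_eq_zpow y
    set z := expVec (FreeGroup.mk p)
    have hpz : normV z < n := hp p (List.prefix_append _ _)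
    have hpy : FreeGroup.mk (p ++ [y]) = FreeGroup.mk p * FreeGroup.of y.1 ^ s := by
      rw [← FreeGroup.mul_mk, hy]
    have hzy : expVec (FreeGroup.mk (p ++ [y])) = z + Pi.single y.1 s := by
      rw [hpy, expVec_mul, expVec_of_zpow]
    have hpyz : normV (z + Pi.single y.1 s) < n := hzy ▸ hp _ List.prefix_rfl
    have hinit := (ih fun p' hp' => hp p' (hp'.trans (List.prefix_append _ _))).conj (τ y.1 ^ s)
    have hletter := near_pconj_prodPow_mul_zpow x y.1 hs z fun q hq =>
      hcomm q (hq.elim (fun h => (normV_mono h).trans_lt hpz) fun h => (normV_mono h).trans_lt hpyz)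
    have htail : (∑ l ∈ Finset.Ioi y.1, (z l).natAbs : ℕ) ≤ (k * n : ℝ) :=
      calc ((∑ l ∈ Finset.Ioi y.1, (z l).natAbs : ℕ) : ℝ) ≤ absSum z :=
            Nat.cast_le.2 (Finset.sum_le_sum_of_subset (Finset.subset_univ _))
        _ ≤ k * normV z := absSum_le_mul_normV z
        _ ≤ k * n := by gcongr
    rw [← pconj_mul, ← pconj_mul] at hinit
    rw [hzy, hpy, map_mul, map_zpow, FreeGroup.lift_apply_of]
    refine (hinit.trans (hletter.mono (mul_le_mul_of_nonneg_right htail hA))).mono ?_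
    rw [List.length_append, List.length_singleton]
    push_cast
    linarith

end Ordering

section HRel

variable {m k : ℕ} {aij : Fin k → Fin k → Fin m} {L Lp Lm : Finset ((Fin k → ℤ) →₀ ℤ)}
  {ord : ((Fin k → ℤ) →₀ ℤ) → List (Fin k → ℤ)} {ρ : ℝ} {Rx : Set (FreeGroup (Fin m ⊕ Fin k))}

theorem tword_eq_lift (u : FreeGroup (Fin k)) :
    (tword u : FreeGroup (Fin m ⊕ Fin k)) = FreeGroup.lift tgen u :=
  DFunLike.congr_fun FreeGroup.map_eq_lift u

theorem tword_ordWord (v : Fin k → ℤ) :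
    (tword (ordWord v) : FreeGroup (Fin m ⊕ Fin k)) = prodPow tgen v :=
  map_prodPow (FreeGroup.map Sum.inr) FreeGroup.of v

theorem orderingWord_eq (a : Fin m) (u : FreeGroup (Fin k)) :
    orderingWord a u = pconj (agen a) (FreeGroup.lift tgen u) *
      (pconj (agen a) (prodPow tgen (expVec u)))⁻¹ := by
  rw [orderingWord, ordered, tword_ordWord, tword_eq_lift, inv_pconj]

theorem tameRelations_hRel (hL : L ⊆ Lp ∪ Lm) (hord : IsSupportOrder ord) :
    TameRelations (HRel aij Lp Lm ord ρ Rx) tgen agen L ρ where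
  commutatorsNear i j hij := by
    obtain hij | hji := hij.lt_or_gt
    · exact ⟨aij i j, Or.inl (areaLe_of_mem (Or.inl ⟨i, j, hij, rfl⟩))⟩
    · exact ⟨aij j i, Or.inr (areaLe_of_mem (Or.inl ⟨j, i, hji, rfl⟩))⟩
  commLe_of_lt v hv a b := commLe_iff_areaLe_pcomm.2
    (areaLe_of_mem (Or.inr (Or.inl ⟨a, b, v, hv, by rw [tword_ordWord]⟩)))
  near_expansion lam hlam := by
    refine ⟨ord lam, hord lam, ?_⟩
    simp only [← tword_ordWord]
    obtain hlam | hlam := Finset.mem_union.1 (hL hlam)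
    · exact Or.inl fun a => areaLe_of_mem (Or.inr (Or.inr (Or.inl ⟨a, lam, hlam, rfl⟩)))
    · exact Or.inr fun a =>
        areaLe_of_mem (Or.inr (Or.inr (Or.inr (Or.inl ⟨a, lam, hlam, rfl⟩))))

end HRel

theorem TameCond.exists_areaLe_orderingWord {k : ℕ} {L : Finset ((Fin k → ℤ) →₀ ℤ)}
    (htame : TameCond L) :
    ∃ ρ₀ C : ℝ, 0 < ρ₀ ∧ 1 ≤ C ∧ ∀ ρ : ℝ, ρ₀ ≤ ρ →
      ∀ (m : ℕ) (Lp Lm : Finset ((Fin k → ℤ) →₀ ℤ)), L ⊆ Lp ∪ Lm →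
      ∀ (ord : ((Fin k → ℤ) →₀ ℤ) → List (Fin k → ℤ)), IsSupportOrder ord →
      ∀ (aij : Fin k → Fin k → Fin m) (Rx : Set (FreeGroup (Fin m ⊕ Fin k))) (a : Fin m)
        (u : FreeGroup (Fin k)) (n : ℕ), TraceInBall u n →
        AreaLe (HRel aij Lp Lm ord ρ Rx) (u.norm * (k * n * (C ^ n + 2))) (orderingWord a u) := by
  obtain ⟨ρ₀, C, hρ₀, hC, hcomm⟩ := htame.exists_commLe
  refine ⟨ρ₀, C, hρ₀, hC, fun ρ hρ m Lp Lm hL ord hord aij Rx a u n hu => ?_⟩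
  have hR : TameRelations (HRel aij Lp Lm ord ρ Rx) tgen agen L ρ := tameRelations_hRel hL hord
  have hnear := near_pconj_lift_mk (τ := tgen) (by positivity) (agen a)
    (fun q hq => hR.commutatorsNear.commLe_pcomm fun e => (hcomm hρ hR n q hq.le e a).symm)
    u.toWord hu
  rw [FreeGroup.mk_toWord] at hnear
  rw [orderingWord_eq]
  exact hnear

theorem exists_one_lt_forall_le_pow {c C : ℝ} (hc : 0 ≤ c) (hC : 1 ≤ C) :
    ∃ K : ℝ, 1 < K ∧ ∀ n : ℕ, c * n * (C ^ n + 2) ≤ K ^ n ∧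
      n * (c * (n + 1 : ℕ) * (C ^ (n + 1) + 2)) ≤ K ^ n := by
  set J := (1 + 3 * c) * C with hJ
  have hJ1 : 1 ≤ J := one_le_mul_of_one_le_of_one_le (by linarith) hC
  have hpow (n : ℕ) : c * n * (C ^ n + 2) ≤ J ^ n :=
    calc c * n * (C ^ n + 2) ≤ c * n * (C ^ n + 2 * C ^ n) := by
          have : 1 ≤ C ^ n := one_le_pow₀ hC
          gcongr
          linarith
      _ ≤ (1 + n * (3 * c)) * C ^ n := by
          have : 0 ≤ C ^ n := by positivity
          linarith
      _ ≤ J ^ n := by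
          rw [hJ, mul_pow]
          gcongr
          exact one_add_mul_le_pow (by linarith) n
  refine ⟨(1 + J) * J, by nlinarith, fun n => ⟨(hpow n).trans ?_, ?_⟩⟩
  · exact pow_le_pow_left₀ (by linarith) (le_mul_of_one_le_left (by linarith) (by linarith)) n
  · calc (n : ℝ) * (c * (n + 1 : ℕ) * (C ^ (n + 1) + 2)) ≤ n * J ^ (n + 1) := by
          gcongr
          exact hpow (n + 1)
      _ ≤ (1 + n * J) * J ^ n := by
          have : 0 ≤ J ^ n := by positivity
          rw [pow_succ]
          linarith
      _ ≤ ((1 + J) * J) ^ n := by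
          rw [mul_pow (1 + J)]
          gcongr
          exact one_add_mul_le_pow (by linarith) n

theorem ordering_area_bound_general {k : ℕ} {L : Finset ((Fin k → ℤ) →₀ ℤ)}
    (htame : TameCond L) :
    ∃ ρ₀ : ℝ, 0 < ρ₀ ∧ ∃ K : ℝ, 1 < K ∧ ∀ ρ : ℝ, ρ₀ ≤ ρ →
      ∀ (m : ℕ) (Lp Lm : Finset ((Fin k → ℤ) →₀ ℤ)), L ⊆ Lp ∪ Lm →
      ∀ (ord : ((Fin k → ℤ) →₀ ℤ) → List (Fin k → ℤ)), IsSupportOrder ord →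
      ∀ (aij : Fin k → Fin k → Fin m) (Rx : Set (FreeGroup (Fin m ⊕ Fin k)))
        (a : Fin m) (u : FreeGroup (Fin k)),
        orderingWord a u ∈ Subgroup.normalClosure (HRel aij Lp Lm ord ρ Rx) ∧
        (∀ n : ℕ, TraceInBall u n →
          (area (HRel aij Lp Lm ord ρ Rx) (orderingWord a u) : ℝ) ≤ (u.norm : ℝ) * K ^ n) ∧
        (∀ n : ℕ, u.norm ≤ n →
          (area (HRel aij Lp Lm ord ρ Rx) (orderingWord a u) : ℝ) ≤ K ^ n) := by
  obtain ⟨ρ₀, C, hρ₀, hC, harea⟩ := htame.exists_areaLe_orderingWord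
  obtain ⟨K, hK, hpow⟩ := exists_one_lt_forall_le_pow (Nat.cast_nonneg k) hC
  refine ⟨ρ₀, hρ₀, K, hK, fun ρ hρ m Lp Lm hL ord hord aij Rx a u => ?_⟩
  have hu (n : ℕ) (hn : TraceInBall u n) := harea ρ hρ m Lp Lm hL ord hord aij Rx a u n hn
  refine ⟨(hu _ (traceInBall_succ_of_norm_le le_rfl)).mem_normalClosure, fun n hn => ?_,
    fun n hn => ?_⟩
  · refine (hu n hn).area_le.trans ?_
    gcongr
    exact (hpow n).1
  · refine (hu (n + 1) (traceInBall_succ_of_norm_le hn)).area_le.trans (le_trans ?_ (hpow n).2)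
    gcongr

/-- In `H(ρ, ℛ)` the word `(u⁻¹ a u)(ū⁻¹ a⁻¹ ū)` represents `1`; its area is at most `|u| Kⁿ` if
the trace of `u` lies in the open ball of radius `n`, and at most `Kⁿ` if `|u| ≤ n`. -/
theorem ordering_area_bound (k : ℕ) (hk : 1 ≤ k)
    (L : Finset ((Fin k → ℤ) →₀ ℤ)) (htame : TameCond L) :
    ∃ ρ₀ : ℝ, 0 < ρ₀ ∧ ∀ ρ : ℝ, ρ₀ ≤ ρ → ∀ m : ℕ, 1 ≤ m →
      ∃ K : ℝ, 1 < K ∧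
        ∀ (Lp Lm : Finset ((Fin k → ℤ) →₀ ℤ)), Lp ∪ Lm = L →
        ∀ (ord : ((Fin k → ℤ) →₀ ℤ) → List (Fin k → ℤ)), IsSupportOrder ord →
        ∀ (aij : Fin k → Fin k → Fin m) (Rx : Set (FreeGroup (Fin m ⊕ Fin k))), Rx.Finite →
        ∀ (a : Fin m) (u : FreeGroup (Fin k)),
          orderingWord a u ∈ Subgroup.normalClosure (HRel aij Lp Lm ord ρ Rx) ∧
          (∀ n : ℕ, TraceInBall u n →
            (area (HRel aij Lp Lm ord ρ Rx) (orderingWord a u) : ℝ) ≤ (u.norm : ℝ) * K ^ n) ∧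
          (∀ n : ℕ, u.norm ≤ n →
            (area (HRel aij Lp Lm ord ρ Rx) (orderingWord a u) : ℝ) ≤ K ^ n) := by
  obtain ⟨ρ₀, hρ₀, K, hK, harea⟩ := ordering_area_bound_general htame
  exact ⟨ρ₀, hρ₀, fun ρ hρ m _ => ⟨K, hK, fun Lp Lm hL ord hord aij Rx _ =>
    harea ρ hρ m Lp Lm hL.ge ord hord aij Rx⟩⟩
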